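/- arXiv:1811.00992 — 4 statements merged into one kernel-verified Lean document; each statement's English description precedes it below -/
import Mathlib

section
/- Let E be a real normed vector space and f : E → ℝ an infinitely differentiable function with f(x) ≥ 0 for every x ∈ E. Suppose that at a point x₀ ∈ E and for some n ∈ ℕ the iterated derivatives satisfy iteratedFDeriv ℝ j f x₀ = 0 for all j < n while iteratedFDeriv ℝ n f x₀ ≠ 0. Then n is even. -/
/-!
Restrict `f` to a line `t ↦ x₀ + t • v`. The `n`-th derivative at `0` of this nonnegative function
is `D v … v`, where `D = iteratedFDeriv ℝ n f x₀`, and its lower derivatives vanish, so by Taylor's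
theorem it is `t ^ n * D v … v / n! + o(t ^ n)`. If `n` is odd, comparing the signs for `t > 0` and
`t < 0` gives `D v … v = 0` for every `v` (`iteratedDeriv_eq_zero_of_odd`). A symmetric multilinear
map that vanishes on the diagonal is zero (`eq_zero_of_diag_eq_zero`), so `D = 0`, a contradiction.

Symmetry of higher derivatives of `C^∞` functions (`iteratedFDeriv_comp_perm_of_smooth`) is deduced
from the symmetry of the second derivative, adjacent transpositions generating all permutations.
-/

open Filter Topology in
/-- At a point where the lower derivatives vanish, the derivative of odd order `n` of a nonnegative
function also vanishes: it is `n!` times the limit of `g t / t ^ n`, which is nonnegative from the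
right and nonpositive from the left. -/
theorem iteratedDeriv_eq_zero_of_odd (g : ℝ → ℝ) (n : ℕ) (hg : ContDiff ℝ n g)
    (hpos : ∀ t, 0 ≤ g t) (hlt : ∀ j < n, iteratedDeriv j g 0 = 0) (hodd : Odd n) :
    iteratedDeriv n g 0 = 0 := by
  have hT := Real.taylor_tendsto (n := n) convex_univ (Set.mem_univ (0 : ℝ)) hg.contDiffOn
  have hpoly : ∀ t, taylorWithinEval g n Set.univ 0 t
      = ((n.factorial : ℝ)⁻¹ * t ^ n) * iteratedDeriv n g 0 := by
    intro t
    rw [taylor_within_apply, Finset.sum_range_succ, Finset.sum_eq_zero]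
    · simp [iteratedDerivWithin_univ]
    · intro k hk
      simp [iteratedDerivWithin_univ, hlt k (Finset.mem_range.1 hk)]
  set c := iteratedDeriv n g 0 with hc
  have hlim : Tendsto (fun t => g t / t ^ n) (𝓝[≠] (0 : ℝ)) (𝓝 ((n.factorial : ℝ)⁻¹ * c)) := by
    have h1 := (hT.mono_left (nhdsWithin_mono (0 : ℝ) (Set.subset_univ ({0}ᶜ : Set ℝ)))).add_const
      ((n.factorial : ℝ)⁻¹ * c)
    rw [zero_add] at h1
    refine h1.congr' ?_
    filter_upwards [self_mem_nhdsWithin] with t ht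
    have ht' : t ≠ 0 := ht
    rw [hpoly, sub_zero]
    field_simp
    ring
  have hfac : (0 : ℝ) < (n.factorial : ℝ)⁻¹ := by positivity
  have hge : 0 ≤ (n.factorial : ℝ)⁻¹ * c := by
    refine ge_of_tendsto (hlim.mono_left (nhdsWithin_mono 0 (s := Set.Ioi 0) ?_)) ?_
    · intro t ht
      exact ne_of_gt ht
    · filter_upwards [self_mem_nhdsWithin] with t ht
      exact div_nonneg (hpos t) (pow_nonneg (le_of_lt ht) n)
  have hle : (n.factorial : ℝ)⁻¹ * c ≤ 0 := by
    refine le_of_tendsto (hlim.mono_left (nhdsWithin_mono 0 (s := Set.Iio 0) ?_)) ?_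
    · intro t ht
      exact ne_of_lt ht
    · filter_upwards [self_mem_nhdsWithin] with t ht
      exact div_nonpos_of_nonneg_of_nonpos (hpos t) (hodd.pow_neg ht).le
  exact (mul_eq_zero.1 (le_antisymm hle hge)).resolve_left hfac.ne'

section Jets

variable {E : Type*} [NormedAddCommGroup E] [NormedSpace ℝ E]

theorem differentiable_iteratedFDeriv_of_smooth {f : E → ℝ} (hf : ContDiff ℝ (⊤ : ℕ∞) f) (n : ℕ) :
    Differentiable ℝ (iteratedFDeriv ℝ n f) :=
  hf.differentiable_iteratedFDeriv (by exact_mod_cast WithTop.coe_lt_top n)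

theorem contDiff_iteratedFDeriv_apply {f : E → ℝ} (hf : ContDiff ℝ (⊤ : ℕ∞) f) (n : ℕ)
    (w : Fin n → E) : ContDiff ℝ (⊤ : ℕ∞) (fun y => iteratedFDeriv ℝ n f y w) := by
  have h : ContDiff ℝ (⊤ : ℕ∞) (iteratedFDeriv ℝ n f) :=
    hf.iteratedFDeriv_right (by exact_mod_cast le_top)
  exact (ContinuousMultilinearMap.apply ℝ (fun _ : Fin n => E) ℝ w).contDiff.comp h

/-- The two leftmost arguments are those of the second derivative of
`y ↦ iteratedFDeriv ℝ n f y w`. -/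
theorem iteratedFDeriv_add_two_apply {f : E → ℝ} (hf : ContDiff ℝ (⊤ : ℕ∞) f) (n : ℕ) (x : E)
    (v : Fin (n + 2) → E) :
    iteratedFDeriv ℝ (n + 2) f x v =
      fderiv ℝ (fderiv ℝ (fun y => iteratedFDeriv ℝ n f y (Fin.tail (Fin.tail v)))) x
        (v 0) (v 1) := by
  set h := fun y => iteratedFDeriv ℝ n f y (Fin.tail (Fin.tail v)) with hh
  have hcd : ContDiff ℝ (⊤ : ℕ∞) h := contDiff_iteratedFDeriv_apply hf n _
  have hd : Differentiable ℝ (fderiv ℝ h) :=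
    (hcd.fderiv_right (m := 1) (WithTop.coe_le_coe.2 le_top)).differentiable (by norm_num)
  rw [(differentiable_iteratedFDeriv_of_smooth hf (n + 1) x).iteratedFDeriv_succ_apply_left']
  have h1 : (fun y => iteratedFDeriv ℝ (n + 1) f y (Fin.tail v)) =
      fun y => fderiv ℝ h y (v 1) := by
    funext y
    rw [(differentiable_iteratedFDeriv_of_smooth hf n y).iteratedFDeriv_succ_apply_left']
    rfl
  rw [h1, fderiv_clm_apply (hd x) (differentiableAt_const _)]
  simp

theorem iteratedFDeriv_comp_swap_of_smooth {f : E → ℝ} (hf : ContDiff ℝ (⊤ : ℕ∞) f) (n : ℕ)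
    (i : Fin n) (x : E) (v : Fin (n + 1) → E) :
    iteratedFDeriv ℝ (n + 1) f x (v ∘ Equiv.swap i.castSucc i.succ) =
      iteratedFDeriv ℝ (n + 1) f x v := by
  induction n generalizing x with
  | zero => exact i.elim0
  | succ n ih =>
    cases i using Fin.cases with
    | zero =>
      rw [iteratedFDeriv_add_two_apply hf, iteratedFDeriv_add_two_apply hf]
      have ht : Fin.tail (Fin.tail (v ∘ Equiv.swap (Fin.castSucc 0) (Fin.succ 0)))
          = Fin.tail (Fin.tail v) := by
        funext k
        simp only [Fin.tail, Function.comp_apply]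
        rw [Equiv.swap_apply_of_ne_of_ne]
        · simp [Fin.ext_iff]
        · simp [Fin.ext_iff]
      have hsym : IsSymmSndFDerivAt ℝ
          (fun y => iteratedFDeriv ℝ n f y (Fin.tail (Fin.tail v))) x :=
        (contDiff_iteratedFDeriv_apply hf n _).contDiffAt.isSymmSndFDerivAt
          (by simpa using ENat.LEInfty.out)
      rw [ht]
      have h0 : (v ∘ Equiv.swap (Fin.castSucc 0) (Fin.succ 0)) 0 = v 1 := by
        simp
      have h1 : (v ∘ Equiv.swap (Fin.castSucc 0) (Fin.succ 0)) 1 = v 0 := by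
        simp
      rw [h0, h1]
      exact hsym.eq _ _
    | succ i =>
      rw [(differentiable_iteratedFDeriv_of_smooth hf (n + 1) x).iteratedFDeriv_succ_apply_left',
        (differentiable_iteratedFDeriv_of_smooth hf (n + 1) x).iteratedFDeriv_succ_apply_left']
      have ht : Fin.tail (v ∘ Equiv.swap i.succ.castSucc i.succ.succ)
          = Fin.tail v ∘ Equiv.swap i.castSucc i.succ := by
        funext k
        simp only [Fin.tail, Function.comp_apply]
        rw [← Fin.succ_castSucc,
          (Fin.succ_injective _).swap_apply i.castSucc i.succ k]
      have h0 : (v ∘ Equiv.swap i.succ.castSucc i.succ.succ) 0 = v 0 := by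
        simp only [Function.comp_apply]
        rw [Equiv.swap_apply_of_ne_of_ne]
        · simp [Fin.ext_iff]
        · simp [Fin.ext_iff]
      rw [ht, h0]
      simp_rw [ih]

theorem iteratedFDeriv_comp_perm_of_smooth {f : E → ℝ} (hf : ContDiff ℝ (⊤ : ℕ∞) f) (n : ℕ)
    (x : E) (σ : Equiv.Perm (Fin n)) (v : Fin n → E) :
    iteratedFDeriv ℝ n f x (v ∘ σ) = iteratedFDeriv ℝ n f x v := by
  cases n with
  | zero => congr 1; exact Subsingleton.elim _ _
  | succ n =>
    have hσ : σ ∈ Submonoid.closure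
        (Set.range fun i : Fin n => Equiv.swap i.castSucc i.succ) := by
      rw [Equiv.Perm.mclosure_swap_castSucc_succ]; trivial
    induction hσ using Submonoid.closure_induction generalizing v with
    | mem τ hτ =>
      obtain ⟨i, rfl⟩ := hτ
      exact iteratedFDeriv_comp_swap_of_smooth hf n i x v
    | one => rfl
    | mul σ τ _ _ h1 h2 =>
      rw [Equiv.Perm.coe_mul, ← Function.comp_assoc, h2, h1]

/-- Polarization. The map `y ↦ D y … y` is zero and has the one-term power series `D` at `0`, so
its `n`-th derivative at `0`, which is zero, is the sum of `D (v ∘ σ)` over all permutations `σ`,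
that is, `n! • D v`. -/
theorem eq_zero_of_diag_eq_zero (n : ℕ) (D : ContinuousMultilinearMap ℝ (fun _ : Fin n => E) ℝ)
    (hsymm : ∀ (σ : Equiv.Perm (Fin n)) (v : Fin n → E), D (v ∘ σ) = D v)
    (hdiag : ∀ y, D (fun _ => y) = 0) : D = 0 := by
  classical
  let p : FormalMultilinearSeries ℝ E ℝ := Pi.single n D
  have hp : HasFiniteFPowerSeriesOnBall (fun _ : E => (0 : ℝ)) p 0 (n + 1) ⊤ := by
    refine .mk' ?_ (by simp) ?_
    · intro m hm
      exact Pi.single_eq_of_ne (by omega) _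
    · intro y _
      refine Finset.sum_eq_zero fun i _ => ?_
      by_cases h : i = n
      · subst h
        simp [p, hdiag]
      · simp [p, Pi.single_eq_of_ne h]
  ext v
  have hsum := hp.toHasFPowerSeriesOnBall.iteratedFDeriv_eq_sum_of_completeSpace (n := n) v
  have hterm : ∀ σ : Equiv.Perm (Fin n), p n (fun i => v (σ i)) = D v := by
    intro σ
    simp only [p, Pi.single_eq_same]
    exact hsymm σ v
  simp only [hterm, Finset.sum_const, Finset.card_univ, Fintype.card_perm, Fintype.card_fin] at hsum
  have hz : iteratedFDeriv ℝ n (fun _ : E => (0 : ℝ)) 0 v = 0 := by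
    have := iteratedFDeriv_fun_zero (𝕜 := ℝ) (E := E) (F := ℝ) (n := n)
    rw [show (fun _ : E => (0 : ℝ)) = 0 from rfl] at *
    rw [this]
    rfl
  rw [hz] at hsum
  simpa [Nat.factorial_ne_zero] using hsum.symm

theorem iteratedDeriv_comp_line {f : E → ℝ} (hf : ContDiff ℝ (⊤ : ℕ∞) f) (x₀ v : E) (j : ℕ) :
    iteratedDeriv j (fun t : ℝ => f (x₀ + t • v)) 0 = iteratedFDeriv ℝ j f x₀ (fun _ => v) := by
  have hf' : ContDiff ℝ (⊤ : ℕ∞) (fun y => f (x₀ + y)) := hf.comp (by fun_prop)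
  have h := (ContinuousLinearMap.toSpanSingleton ℝ v).iteratedFDeriv_comp_right hf' 0 (i := j)
    (by exact_mod_cast le_top)
  rw [iteratedFDeriv_comp_add_left] at h
  rw [iteratedDeriv_eq_iteratedFDeriv]
  have h2 := congrArg (fun M => M (fun _ : Fin j => (1 : ℝ))) h
  simpa [Function.comp_def] using h2

end Jets

/-- Semi-positivity forces the order of vanishing to be even: if `f ≥ 0` is smooth,
all iterated derivatives of order `< n` vanish at `x₀` and the `n`-th does not, then
`n` is even. -/
theorem nonneg_smooth_first_nonvanishing_jet_even
    {E : Type*} [NormedAddCommGroup E] [NormedSpace ℝ E]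
    (f : E → ℝ) (hf : ContDiff ℝ (⊤ : ℕ∞) f) (hpos : ∀ x, 0 ≤ f x)
    (x₀ : E) (n : ℕ)
    (hlt : ∀ j < n, iteratedFDeriv ℝ j f x₀ = 0)
    (hn : iteratedFDeriv ℝ n f x₀ ≠ 0) :
    Even n := by
  by_contra hne
  refine hn (eq_zero_of_diag_eq_zero n _
    (fun σ v => iteratedFDeriv_comp_perm_of_smooth hf n x₀ σ v) fun v => ?_)
  rw [← iteratedDeriv_comp_line hf]
  refine iteratedDeriv_eq_zero_of_odd _ n ?_ (fun t => hpos _) ?_ (Nat.not_even_iff_odd.1 hne)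
  · exact (hf.of_le (by exact_mod_cast le_top)).comp (by fun_prop)
  · intro j hj
    rw [iteratedDeriv_comp_line hf, hlt j hj]
    rfl
end

section
/- Let E be a real normed vector space and f : E → ℝ an infinitely differentiable function with f(x) ≥ 0 for every x ∈ E. Assume f vanishes to finite order at every point, i.e. for every x ∈ E there exists n ∈ ℕ with iteratedFDeriv ℝ n f x ≠ 0. Then the set {x ∈ E | f x > 0} is open and dense in E. -/
/-- If a nonnegative smooth function vanishes to finite order at every point, then
the set where it is positive is open and dense. -/
theorem nonneg_smooth_finite_order_vanishing_pos_open_dense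
    {E : Type*} [NormedAddCommGroup E] [NormedSpace ℝ E]
    (f : E → ℝ) (hf : ContDiff ℝ (⊤ : ℕ∞) f) (hpos : ∀ x, 0 ≤ f x)
    (hfin : ∀ x : E, ∃ n : ℕ, iteratedFDeriv ℝ n f x ≠ 0) :
    IsOpen {x : E | 0 < f x} ∧ Dense {x : E | 0 < f x} := by
  refine ⟨isOpen_lt continuous_const hf.continuous, fun x => ?_⟩
  -- Off the closure, `f` vanishes on a neighbourhood of `x`, hence so do all its derivatives.
  by_contra hx
  have hzero : f =ᶠ[nhds x] fun _ => (0 : ℝ) := by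
    filter_upwards [isClosed_closure.isOpen_compl.mem_nhds hx] with y hy
    exact le_antisymm (not_lt.mp fun h => hy (subset_closure h)) (hpos y)
  obtain ⟨n, hn⟩ := hfin x
  apply hn
  rw [(hzero.iteratedFDeriv ℝ n).eq_of_nhds, iteratedFDeriv_fun_zero]
  rfl
end

section
/- Let E and F be real normed vector spaces, f : E → F an infinitely differentiable map, m ∈ ℕ and y ∈ E. Assume that iteratedFDeriv ℝ j f y = 0 for all j ≤ m and that iteratedFDeriv ℝ (m+1) f y ≠ 0. Then there exists an infinitely differentiable function g : E → ℝ such that g y = 0, fderiv ℝ g y ≠ 0, and g x = 0 for every x ∈ E satisfying iteratedFDeriv ℝ j f x = 0 for all j ≤ m. -/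
/-! The function `g` is a scalar component of the `m`-th derivative of `f`: pick vectors
`v₀, …, vₘ` with `D^{m+1} f(y)(v₀, …, vₘ) ≠ 0` and, by Hahn–Banach, a continuous functional `ℓ`
on `F` not vanishing on that value, and put `g x = ℓ (D^m f(x)(v₁, …, vₘ))`. It vanishes wherever
`D^m f` does, and its derivative at `y` in the direction `v₀` is
`ℓ (D^{m+1} f(y)(v₀, …, vₘ)) ≠ 0`. -/


/-- Structure of the maximal vanishing locus: if all jets of `f` of order `≤ m` vanish
at `y` but the `(m+1)`-st does not, there is a smooth real function `g` vanishing at `y`,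
with nonzero differential at `y`, which vanishes on the locus where all jets of `f` of
order `≤ m` vanish. -/
theorem max_vanishing_locus_in_hypersurface
    {E F : Type*} [NormedAddCommGroup E] [NormedSpace ℝ E]
    [NormedAddCommGroup F] [NormedSpace ℝ F]
    (f : E → F) (hf : ContDiff ℝ (⊤ : ℕ∞) f) (m : ℕ) (y : E)
    (hvan : ∀ j ≤ m, iteratedFDeriv ℝ j f y = 0)
    (hnz : iteratedFDeriv ℝ (m + 1) f y ≠ 0) :
    ∃ g : E → ℝ, ContDiff ℝ (⊤ : ℕ∞) g ∧ g y = 0 ∧ fderiv ℝ g y ≠ 0 ∧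
      ∀ x : E, (∀ j ≤ m, iteratedFDeriv ℝ j f x = 0) → g x = 0 := by
  obtain ⟨v, hv⟩ : ∃ v, iteratedFDeriv ℝ (m + 1) f y v ≠ 0 := by
    by_contra! h
    exact hnz (ContinuousMultilinearMap.ext h)
  obtain ⟨l, -, hl⟩ := exists_dual_vector ℝ _ (norm_ne_zero_iff.mpr hv)
  let A := l ∘L ContinuousMultilinearMap.apply ℝ (fun _ : Fin m => E) F (Fin.tail v)
  have hD : ContDiff ℝ (⊤ : ℕ∞) (iteratedFDeriv ℝ m f) :=
    hf.iteratedFDeriv_right (by exact_mod_cast le_top)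
  refine ⟨fun x => A (iteratedFDeriv ℝ m f x), A.contDiff.comp hD, ?_, ?_, ?_⟩
  · simp only [hvan m le_rfl, map_zero]
  · intro h
    have hd : HasFDerivAt (fun x => A (iteratedFDeriv ℝ m f x))
        (A ∘L fderiv ℝ (iteratedFDeriv ℝ m f) y) y :=
      A.hasFDerivAt.comp y (hD.differentiable (by simp) y).hasFDerivAt
    rw [hd.fderiv] at h
    have h0 : l (iteratedFDeriv ℝ (m + 1) f y v) = 0 := by
      rw [iteratedFDeriv_succ_apply_left]
      exact DFunLike.congr_fun h (v 0)
    rw [hl] at h0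
    exact hv (norm_eq_zero.mp (by simpa using h0))
  · intro x hx
    simp only [hx m le_rfl, map_zero]
end

section
/- For every natural number q and every real D > 0 there exists a constant c > 0 such that for all real t with 0 < t ≤ 1, all d with 0 ≤ d ≤ D, and all s ∈ ℝ, one has ‖∫_{ξ ∈ {ξ : |ξ| ≥ d}} exp(i·s·ξ) · iteratedDeriv (2q) (fun ξ => (4πt)^(−1/2) · exp(−ξ²/(4t))) ξ dξ‖ ≤ c · t^(−2q−1/2) · exp(−d²/(4t)). -/
open MeasureTheory

/-!
Put `G y = exp (-y²/2)`. The heat factor is `(4πt)^(-1/2) · G (ξ/√(2t))`, so its `2q`-th derivative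
is `(4πt)^(-1/2) (2t)^(-q) He_{2q}(ξ/√(2t)) exp (-ξ²/(4t))`, with `He` the Hermite polynomial.
For `t ≤ 1` the crude bound `|He_{2q}(y)| ≤ C (1 + |y|)^(2q)` shows that this is at most
`C t^(-2q-1/2) (1 + |ξ|)^(2q) exp (-ξ²/(4t))`.

The power of `t` is already the desired one, so the tail needs no rescaling: when `d ≤ |ξ|`, `d ≤ D`
and `t ≤ 1`, `(ξ² - d²)/(4t) ≥ (ξ² - d²)/4`, whence
`exp (-ξ²/(4t)) ≤ exp (-d²/(4t)) · exp (D²/4) · exp (-ξ²/4)`. Half of the last Gaussian absorbs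
the polynomial and the other half is integrable over all of `ℝ`. The phase has modulus one and only
enters through absolute values.
-/

/-- The constant may be taken as one plus the sum of the absolute values of the coefficients. -/
lemma abs_aeval_hermite_le (n : ℕ) :
    ∃ C : ℝ, 0 < C ∧ ∀ x : ℝ, |Polynomial.aeval x (Polynomial.hermite n)| ≤ C * (1 + |x|) ^ n := by
  refine ⟨1 + ∑ i ∈ Finset.range (n + 1), |((Polynomial.hermite n).coeff i : ℝ)|,
    by positivity, fun x => ?_⟩
  have h1 : (1 : ℝ) ≤ 1 + |x| := by linarith [abs_nonneg x]
  rw [Polynomial.aeval_eq_sum_range, Polynomial.natDegree_hermite]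
  calc |∑ i ∈ Finset.range (n + 1), (Polynomial.hermite n).coeff i • x ^ i|
      ≤ ∑ i ∈ Finset.range (n + 1), |(Polynomial.hermite n).coeff i • x ^ i| :=
        Finset.abs_sum_le_sum_abs _ _
    _ ≤ ∑ i ∈ Finset.range (n + 1), |((Polynomial.hermite n).coeff i : ℝ)| * (1 + |x|) ^ n := by
        refine Finset.sum_le_sum fun i hi => ?_
        rw [zsmul_eq_mul, abs_mul, abs_pow]
        gcongr
        calc |x| ^ i ≤ (1 + |x|) ^ i := by gcongr; linarith
          _ ≤ (1 + |x|) ^ n := pow_le_pow_right₀ h1 (by simp at hi; omega)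
    _ = (∑ i ∈ Finset.range (n + 1), |((Polynomial.hermite n).coeff i : ℝ)|) * (1 + |x|) ^ n := by
        rw [Finset.sum_mul]
    _ ≤ _ := by gcongr; linarith

lemma iteratedDeriv_heat (n : ℕ) (t : ℝ) (ht : 0 < t) (ξ : ℝ) :
    iteratedDeriv n (fun ξ : ℝ => (4 * Real.pi * t) ^ (-(1 : ℝ) / 2) *
        Real.exp (-ξ ^ 2 / (4 * t))) ξ =
      (4 * Real.pi * t) ^ (-(1 : ℝ) / 2) * ((√(2 * t))⁻¹ ^ n *
        ((-1) ^ n * Polynomial.aeval ((√(2 * t))⁻¹ * ξ) (Polynomial.hermite n) *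
          Real.exp (-ξ ^ 2 / (4 * t)))) := by
  have hs : ((√(2 * t))⁻¹) ^ 2 = (2 * t)⁻¹ := by
    rw [inv_pow, Real.sq_sqrt (by positivity)]
  have key : ∀ y : ℝ, -(((√(2 * t))⁻¹ * y) ^ 2 / 2) = -y ^ 2 / (4 * t) := by
    intro y
    rw [mul_pow, hs]
    field_simp
    ring
  have hG : ContDiff ℝ n (fun y : ℝ => Real.exp (-(y ^ 2 / 2))) := by fun_prop
  have hf : (fun ξ : ℝ => (4 * Real.pi * t) ^ (-(1 : ℝ) / 2) * Real.exp (-ξ ^ 2 / (4 * t))) =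
      fun ξ : ℝ => (4 * Real.pi * t) ^ (-(1 : ℝ) / 2) *
        (fun z : ℝ => (fun y : ℝ => Real.exp (-(y ^ 2 / 2))) ((√(2 * t))⁻¹ * z)) ξ := by
    funext y
    simp only [key]
  rw [hf, iteratedDeriv_const_mul_field, iteratedDeriv_comp_const_mul hG]
  simp only [iteratedDeriv_eq_iterate, Polynomial.deriv_gaussian_eq_hermite_mul_gaussian, key]

/-- The Gaussian `exp (-ξ²/8)` absorbs polynomial growth. -/
lemma one_add_abs_pow_le (n : ℕ) (ξ : ℝ) :
    (1 + |ξ|) ^ n ≤ n.factorial * Real.exp 3 * Real.exp (ξ ^ 2 / 8) := by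
  have h := Real.pow_div_factorial_le_exp (1 + |ξ|) (by positivity) n
  rw [div_le_iff₀ (by positivity)] at h
  -- completing the square: `ξ²/8 - |ξ| + 2 = (|ξ| - 4)²/8`
  have h2 : Real.exp (1 + |ξ|) ≤ Real.exp 3 * Real.exp (ξ ^ 2 / 8) := by
    rw [← Real.exp_add, Real.exp_le_exp]
    nlinarith [sq_nonneg (|ξ| - 4), sq_abs ξ]
  calc (1 + |ξ|) ^ n ≤ Real.exp (1 + |ξ|) * n.factorial := h
    _ ≤ (Real.exp 3 * Real.exp (ξ ^ 2 / 8)) * n.factorial := by gcongr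
    _ = _ := by ring

/-- Pointwise form of the estimate. The right-hand side is integrable in `ξ` with an integral that
does not depend on `t` and `d`. -/
lemma abs_iteratedDeriv_heat_le (q : ℕ) (D : ℝ) :
    ∃ C : ℝ, 0 < C ∧ ∀ t : ℝ, 0 < t → t ≤ 1 → ∀ d : ℝ, 0 ≤ d → d ≤ D → ∀ ξ : ℝ, d ≤ |ξ| →
      |iteratedDeriv (2 * q) (fun ξ : ℝ => (4 * Real.pi * t) ^ (-(1 : ℝ) / 2) *
          Real.exp (-ξ ^ 2 / (4 * t))) ξ| ≤
        C * t ^ (-2 * (q : ℝ) - 1 / 2) * Real.exp (-d ^ 2 / (4 * t)) *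
          Real.exp (-(1 / 8) * ξ ^ 2) := by
  obtain ⟨C, hC, hb⟩ := abs_aeval_hermite_le (2 * q)
  refine ⟨C * ((2 * q).factorial * Real.exp 3) * Real.exp (D ^ 2 / 4), by positivity, ?_⟩
  intro t ht ht1 d hd hdD ξ hξ
  rw [iteratedDeriv_heat _ _ ht]
  have hst : 0 < √t := Real.sqrt_pos.2 ht
  have hb1 : 1 ≤ (√t)⁻¹ := (one_le_inv₀ hst).2 (Real.sqrt_le_one.2 ht1)
  have ha : (√(2 * t))⁻¹ ≤ (√t)⁻¹ := inv_anti₀ hst (Real.sqrt_le_sqrt (by linarith))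
  have ha0 : 0 ≤ (√(2 * t))⁻¹ := by positivity
  have hpre : (4 * Real.pi * t) ^ (-(1 : ℝ) / 2) ≤ t ^ (-(1 : ℝ) / 2) :=
    Real.rpow_le_rpow_of_nonpos ht (by nlinarith [Real.pi_gt_three]) (by norm_num)
  have hherm : |Polynomial.aeval ((√(2 * t))⁻¹ * ξ) (Polynomial.hermite (2 * q))| ≤
      C * ((√t)⁻¹ ^ (2 * q) * (1 + |ξ|) ^ (2 * q)) := by
    refine (hb _).trans ?_
    rw [← mul_pow]
    gcongr
    rw [abs_mul, abs_of_nonneg ha0]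
    nlinarith [mul_le_mul_of_nonneg_right ha (abs_nonneg ξ)]
  have hpow : t ^ (-2 * (q : ℝ) - 1 / 2) =
      t ^ (-(1 : ℝ) / 2) * ((√t)⁻¹ ^ (2 * q) * (√t)⁻¹ ^ (2 * q)) := by
    rw [← mul_pow, ← mul_inv, Real.mul_self_sqrt ht.le, ← Real.rpow_natCast, ← Real.rpow_neg_one,
      ← Real.rpow_mul ht.le, ← Real.rpow_add ht]
    congr 1
    push_cast
    ring
  have hsq : d ^ 2 ≤ ξ ^ 2 := by
    rw [← sq_abs ξ]; gcongr
  -- `t ≤ 1` enters as `(ξ² - d²)/4 ≤ (ξ² - d²)/(4t)`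
  have hexp : Real.exp (-ξ ^ 2 / (4 * t)) ≤
      Real.exp (-d ^ 2 / (4 * t)) * Real.exp (D ^ 2 / 4) * Real.exp (-ξ ^ 2 / 4) := by
    rw [← Real.exp_add, ← Real.exp_add, Real.exp_le_exp]
    have h1 : (ξ ^ 2 - d ^ 2) / 4 ≤ (ξ ^ 2 - d ^ 2) / (4 * t) :=
      div_le_div_of_nonneg_left (by linarith) (by positivity) (by linarith)
    have h2 : d ^ 2 ≤ D ^ 2 := by gcongr
    rw [sub_div] at h1
    rw [sub_div (ξ ^ 2) (d ^ 2) (4 * t)] at h1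
    rw [neg_div, neg_div, neg_div]
    linarith
  have hsplit : Real.exp (-(1 / 8) * ξ ^ 2) = Real.exp (ξ ^ 2 / 8) * Real.exp (-ξ ^ 2 / 4) := by
    rw [← Real.exp_add]; congr 1; ring
  have hpi : 0 ≤ (4 * Real.pi * t) ^ (-(1 : ℝ) / 2) := by positivity
  rw [abs_mul, abs_mul, abs_mul, abs_mul, abs_of_nonneg hpi, abs_of_nonneg (pow_nonneg ha0 _),
    abs_pow, abs_neg, abs_one, one_pow, one_mul, Real.abs_exp, hpow, hsplit]
  calc _ ≤ t ^ (-(1 : ℝ) / 2) * ((√t)⁻¹ ^ (2 * q) *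
        (C * ((√t)⁻¹ ^ (2 * q) * ((2 * q).factorial * Real.exp 3 * Real.exp (ξ ^ 2 / 8))) *
        (Real.exp (-d ^ 2 / (4 * t)) * Real.exp (D ^ 2 / 4) * Real.exp (-ξ ^ 2 / 4)))) := by
        gcongr
        refine hherm.trans ?_
        gcongr
        exact one_add_abs_pow_le _ _
    _ = _ := by ring

/-- The key Gaussian integral estimate in the localization of the sub-Riemannian heat
kernel: the tail integral of the wave phase against derivatives of the heat factor
decays like `t^{−2q−1/2} e^{−d²/(4t)}`. -/
theorem gaussian_tail_wave_integral_estimate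
    (q : ℕ) (D : ℝ) (hD : 0 < D) :
    ∃ c : ℝ, 0 < c ∧ ∀ t : ℝ, 0 < t → t ≤ 1 → ∀ d : ℝ, 0 ≤ d → d ≤ D → ∀ s : ℝ,
      ‖∫ ξ in {ξ : ℝ | d ≤ |ξ|},
          Complex.exp (Complex.I * (s : ℂ) * (ξ : ℂ)) *
            ((iteratedDeriv (2 * q)
              (fun ξ : ℝ => (4 * Real.pi * t) ^ (-(1 : ℝ) / 2) *
                Real.exp (-ξ ^ 2 / (4 * t))) ξ : ℝ) : ℂ)‖ ≤
        c * t ^ (-2 * (q : ℝ) - 1 / 2) * Real.exp (-d ^ 2 / (4 * t)) := by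
  obtain ⟨C, hC, hb⟩ := abs_iteratedDeriv_heat_le q D
  have hint : Integrable (fun ξ : ℝ => Real.exp (-(1 / 8) * ξ ^ 2)) :=
    integrable_exp_neg_mul_sq (by norm_num)
  have hpos : 0 < ∫ ξ : ℝ, Real.exp (-(1 / 8) * ξ ^ 2) := by
    rw [integral_gaussian]; positivity
  refine ⟨C * ∫ ξ : ℝ, Real.exp (-(1 / 8) * ξ ^ 2), by positivity, ?_⟩
  intro t ht ht1 d hd hdD s
  have hmeas : MeasurableSet {ξ : ℝ | d ≤ |ξ|} :=
    measurableSet_le measurable_const continuous_abs.measurable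
  set A : ℝ := C * t ^ (-2 * (q : ℝ) - 1 / 2) * Real.exp (-d ^ 2 / (4 * t)) with hA
  have hA0 : 0 ≤ A := by positivity
  have hintA := hint.const_mul A
  calc _ ≤ ∫ ξ in {ξ : ℝ | d ≤ |ξ|}, A * Real.exp (-(1 / 8) * ξ ^ 2) := by
        refine norm_integral_le_of_norm_le hintA.integrableOn ?_
        refine (ae_restrict_iff' hmeas).2 (Filter.Eventually.of_forall fun ξ hξ => ?_)
        have hphase : ‖Complex.exp (Complex.I * (s : ℂ) * (ξ : ℂ))‖ = 1 := by
          rw [Complex.norm_exp]; simp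
        rw [norm_mul, hphase, one_mul, Complex.norm_real, Real.norm_eq_abs]
        exact hb t ht ht1 d hd hdD ξ hξ
    _ ≤ ∫ ξ : ℝ, A * Real.exp (-(1 / 8) * ξ ^ 2) :=
        setIntegral_le_integral hintA (Filter.Eventually.of_forall fun ξ => by positivity)
    _ = _ := by rw [integral_const_mul, hA]; ring
end
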